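/- Let d ≥ 1 and s ∈ (0,1). Then there exists a constant C = C(d,s) > 0 such that for every Schwartz function u : ℝ^d → ℂ and every x ∈ ℝ^d, the principal value integral converges: the function δ ↦ ∫_{{y : ‖x−y‖ > δ}} (u(x) − u(y))/‖x−y‖^{d+2s} dy tends, as δ → 0⁺, to C · ∫_{ℝ^d} e^{2πi x·ξ} ‖ξ‖^{2s} (𝓕u)(ξ) dξ. -/

import Mathlib

open MeasureTheory
open scoped RealInnerProductSpace

/-- Fourier transform `(𝓕u)(ξ) = ∫ e^{-2πi x·ξ} u(x) dx`. -/
noncomputable def FT {d : ℕ} (u : EuclideanSpace ℝ (Fin d) → ℂ)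
    (ξ : EuclideanSpace ℝ (Fin d)) : ℂ :=
  ∫ x : EuclideanSpace ℝ (Fin d),
    Complex.exp ((-(2 * Real.pi * ⟪x, ξ⟫) : ℝ) * Complex.I) * u x

/-!
For a truncation `δ > 0`, Fourier inversion gives
`u x - u (x - h) = ∫ (1 - e^{-2πi h·ξ}) e^{2πi x·ξ} 𝓕u(ξ) dξ`. Integrating in `h` against the
finite symmetric measure `ν_δ = 1_{‖h‖ > δ} ‖h‖^{-(d+2s)} dh` and exchanging the integrals, the
truncated singular integral is the Fourier multiplier with symbol `∫ (1 - cos (2π h·ξ)) dν_δ(h)`,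
symmetry having removed the sine. As `δ → 0⁺` these symbols increase to
`ψ(ξ) = ∫ (1 - cos (2π h·ξ)) ‖h‖^{-(d+2s)} dh`, finite because `0 < s < 1`, so dominated
convergence applies. Finally `ψ` is rotation invariant and homogeneous of degree `2s`, so
`ψ(ξ) = C ‖ξ‖^{2s}` with `C = ψ(e) > 0` for any unit vector `e`.
-/

section JumpMeasure

open Set

variable {E : Type*} [NormedAddCommGroup E] [MeasurableSpace E] {ν : Measure E}

lemma isFiniteMeasure_restrict_lt_norm (hν : Integrable (fun h ↦ min 1 (‖h‖ ^ 2)) ν) {δ : ℝ}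
    (hδ : 0 < δ) : IsFiniteMeasure (ν.restrict {h | δ < ‖h‖}) := by
  refine isFiniteMeasure_restrict.2 (ne_top_of_le_ne_top
    (hν.measure_ge_lt_top (ε := min 1 (δ ^ 2)) (by positivity)).ne (measure_mono fun h hh ↦ ?_))
  have : δ ≤ ‖h‖ := le_of_lt hh
  simp only [mem_ofPred_eq]
  gcongr

lemma isNegInvariant_restrict_lt_norm (ν : Measure E) [BorelSpace E] [ν.IsNegInvariant] (δ : ℝ) :
    (ν.restrict {h | δ < ‖h‖}).IsNegInvariant where
  neg_eq_self := by
    have hmeas : MeasurableSet {h : E | δ < ‖h‖} :=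
      measurableSet_lt measurable_const measurable_norm
    rw [Measure.neg_def]
    simpa using ((Measure.measurePreserving_neg ν).restrict_preimage hmeas).map_eq

end JumpMeasure

section LevySymbol

open Real Set Filter Topology
open scoped FourierTransform

variable {E : Type*} [NormedAddCommGroup E] [InnerProductSpace ℝ E]

lemma one_sub_cos_inner_le (h ξ : E) :
    1 - cos (2 * π * ⟪h, ξ⟫) ≤ (2 + 2 * π ^ 2 * ‖ξ‖ ^ 2) * min 1 (‖h‖ ^ 2) := by
  rcases le_total 1 (‖h‖ ^ 2) with hfar | hnear
  · rw [min_eq_left hfar, mul_one]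
    linarith [neg_one_le_cos (2 * π * ⟪h, ξ⟫), show 0 ≤ 2 * π ^ 2 * ‖ξ‖ ^ 2 by positivity]
  · rw [min_eq_right hnear]
    have cauchy_schwarz : ⟪h, ξ⟫ ^ 2 ≤ (‖h‖ * ‖ξ‖) ^ 2 :=
      sq_le_sq' (neg_le_of_abs_le (abs_real_inner_le_norm h ξ)) (real_inner_le_norm h ξ)
    calc 1 - cos (2 * π * ⟪h, ξ⟫) ≤ (2 * π * ⟪h, ξ⟫) ^ 2 / 2 := by
          linarith [one_sub_sq_div_two_le_cos (x := 2 * π * ⟪h, ξ⟫)]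
      _ = 2 * π ^ 2 * ⟪h, ξ⟫ ^ 2 := by ring
      _ ≤ 2 * π ^ 2 * (‖h‖ * ‖ξ‖) ^ 2 := by gcongr
      _ ≤ (2 + 2 * π ^ 2 * ‖ξ‖ ^ 2) * ‖h‖ ^ 2 := by linarith [sq_nonneg ‖h‖]

variable [MeasurableSpace E]

/-- The Lévy–Khintchine symbol `ψ(ξ) = ∫ (1 - cos (2π⟪h, ξ⟫)) dν(h)` of the symmetric jump
measure `ν`, with frequencies normalised as in `𝓕`. The Lévy condition is stated separately, as
integrability of `min 1 ‖h‖²`; an atom of `ν` at `0` has no effect. -/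
noncomputable def levySymbol (ν : Measure E) (ξ : E) : ℝ :=
  ∫ h, (1 - cos (2 * π * ⟪h, ξ⟫)) ∂ν

lemma levySymbol_nonneg (ν : Measure E) (ξ : E) : 0 ≤ levySymbol ν ξ :=
  integral_nonneg fun _ ↦ sub_nonneg.2 (cos_le_one _)

variable [BorelSpace E] {ν : Measure E}

lemma integrable_one_sub_cos_inner (hν : Integrable (fun h ↦ min 1 (‖h‖ ^ 2)) ν) (ξ : E) :
    Integrable (fun h ↦ 1 - cos (2 * π * ⟪h, ξ⟫)) ν := by
  refine (hν.const_mul (2 + 2 * π ^ 2 * ‖ξ‖ ^ 2)).mono' (by fun_prop) (.of_forall fun h ↦ ?_)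
  rw [norm_of_nonneg (sub_nonneg.2 (cos_le_one _))]
  exact one_sub_cos_inner_le h ξ

lemma levySymbol_restrict_le (hν : Integrable (fun h ↦ min 1 (‖h‖ ^ 2)) ν) (S : Set E) (ξ : E) :
    levySymbol (ν.restrict S) ξ ≤ levySymbol ν ξ :=
  setIntegral_le_integral (integrable_one_sub_cos_inner hν ξ)
    (.of_forall fun _ ↦ sub_nonneg.2 (cos_le_one _))

lemma levySymbol_pos [ν.IsOpenPosMeasure] (hν : Integrable (fun h ↦ min 1 (‖h‖ ^ 2)) ν) {ξ : E}
    (hξ : ξ ≠ 0) : 0 < levySymbol ν ξ := by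
  refine integral_pos_of_integrable_nonneg_nonzero (x := (2 * ‖ξ‖ ^ 2)⁻¹ • ξ) (by fun_prop)
    (integrable_one_sub_cos_inner hν ξ) (fun _ ↦ sub_nonneg.2 (cos_le_one _)) ?_
  have half_period : 2 * π * ⟪(2 * ‖ξ‖ ^ 2)⁻¹ • ξ, ξ⟫ = π := by
    rw [real_inner_smul_left, real_inner_self_eq_norm_sq]
    field_simp [norm_ne_zero_iff.2 hξ]
  rw [half_period, cos_pi]
  norm_num

lemma tendsto_levySymbol_restrict_lt_norm (hν : Integrable (fun h ↦ min 1 (‖h‖ ^ 2)) ν) (ξ : E) :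
    Tendsto (fun δ : ℝ ↦ levySymbol (ν.restrict {h | δ < ‖h‖}) ξ) (𝓝[>] 0)
      (𝓝 (levySymbol ν ξ)) := by
  have hmeas (δ : ℝ) : MeasurableSet {h : E | δ < ‖h‖} :=
    measurableSet_lt measurable_const measurable_norm
  have hint := integrable_one_sub_cos_inner hν ξ
  simp_rw [levySymbol, ← integral_indicator (hmeas _)]
  refine tendsto_integral_filter_of_dominated_convergence _
    (.of_forall fun δ ↦ hint.aestronglyMeasurable.indicator (hmeas δ))
    (.of_forall fun δ ↦ .of_forall fun h ↦ norm_indicator_le_norm_self _ h) hint.norm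
    (.of_forall fun h ↦ tendsto_const_nhds.congr' ?_)
  rcases eq_or_ne h 0 with rfl | hh
  · simp [indicator]
  · filter_upwards [Ioo_mem_nhdsGT (norm_pos_iff.2 hh)] with δ hδ
    rw [indicator_of_mem (show h ∈ {h | δ < ‖h‖} from hδ.2)]

lemma continuous_levySymbol (μ : Measure E) [IsFiniteMeasure μ] : Continuous (levySymbol μ) := by
  refine continuous_of_dominated (bound := fun _ ↦ 2) (fun ξ ↦ by fun_prop)
    (fun ξ ↦ .of_forall fun h ↦ ?_) (integrable_const 2) (.of_forall fun h ↦ by fun_prop)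
  rw [norm_of_nonneg (sub_nonneg.2 (cos_le_one _))]
  linarith [neg_one_le_cos (2 * π * ⟪h, ξ⟫)]

lemma norm_one_sub_fourierChar_le (t : ℝ) : ‖1 - (𝐞 t : ℂ)‖ ≤ 2 :=
  (norm_sub_le _ _).trans (by norm_num [Circle.norm_coe])

lemma integral_one_sub_fourierChar_eq_levySymbol (μ : Measure E) [IsFiniteMeasure μ]
    [μ.IsNegInvariant] (ξ : E) : ∫ h, (1 - (𝐞 (-⟪h, ξ⟫) : ℂ)) ∂μ = levySymbol μ ξ := by
  have hint : Integrable (fun h ↦ 1 - (𝐞 (-⟪h, ξ⟫) : ℂ)) μ :=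
    .of_bound (by fun_prop) 2 (.of_forall fun h ↦ norm_one_sub_fourierChar_le _)
  have hreal : starRingEnd ℂ (∫ h, (1 - (𝐞 (-⟪h, ξ⟫) : ℂ)) ∂μ)
      = ∫ h, (1 - (𝐞 (-⟪h, ξ⟫) : ℂ)) ∂μ := by
    rw [← integral_conj, ← integral_neg_eq_self]
    simp [← Circle.coe_inv_eq_conj, AddChar.map_neg_eq_inv]
  have hre (t : ℝ) : RCLike.re (1 - (𝐞 (-t) : ℂ)) = 1 - cos (2 * π * t) := by
    rw [RCLike.re_eq_complex_re, Complex.sub_re, Complex.one_re, fourierChar_apply,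
      Complex.exp_ofReal_mul_I_re, mul_neg, cos_neg]
  rw [← Complex.conj_eq_iff_re.1 hreal, ← RCLike.re_eq_complex_re, ← integral_re hint]
  simp_rw [hre, levySymbol]

end LevySymbol

section LevyGenerator

open Real Set Filter Topology
open scoped FourierTransform

variable {E : Type*} [NormedAddCommGroup E] [InnerProductSpace ℝ E] [FiniteDimensional ℝ E]
  [MeasurableSpace E] [BorelSpace E]
  {F : Type*} [NormedAddCommGroup F] [NormedSpace ℂ F]

lemma fourierInv_sub_fourierInv_sub {g : E → F} (hg : Integrable g) (x h : E) :
    𝓕⁻ g x - 𝓕⁻ g (x - h) = ∫ ξ, (1 - (𝐞 (-⟪h, ξ⟫) : ℂ)) • 𝐞 ⟪ξ, x⟫ • g ξ := by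
  have hint (y : E) : Integrable fun ξ ↦ 𝐞 ⟪ξ, y⟫ • g ξ := by
    simpa using (fourierIntegral_convergent_iff (-y)).2 hg
  rw [fourierInv_eq, fourierInv_eq, ← integral_sub (hint x) (hint (x - h))]
  congr 1 with ξ
  rw [sub_smul, one_smul, ← Circle.smul_def, smul_smul, ← AddChar.map_add_eq_mul, inner_sub_right,
    real_inner_comm h ξ, neg_add_eq_sub]

variable [CompleteSpace F]

lemma integral_fourierInv_sub_fourierInv_sub (μ : Measure E) [IsFiniteMeasure μ]
    [μ.IsNegInvariant] {g : E → F} (hg : Integrable g) (x : E) :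
    ∫ h, (𝓕⁻ g x - 𝓕⁻ g (x - h)) ∂μ = 𝓕⁻ (fun ξ ↦ levySymbol μ ξ • g ξ) x := by
  have hint : Integrable (fun ξ ↦ 𝐞 ⟪ξ, x⟫ • g ξ) := by
    simpa using (fourierIntegral_convergent_iff (-x)).2 hg
  have hprod : Integrable (Function.uncurry fun h ξ ↦
      (1 - (𝐞 (-⟪h, ξ⟫) : ℂ)) • 𝐞 ⟪ξ, x⟫ • g ξ) (μ.prod volume) :=
    (hint.comp_snd μ).bdd_smul 2 (by fun_prop)
      (.of_forall fun _ ↦ norm_one_sub_fourierChar_le _)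
  simp_rw [fourierInv_sub_fourierInv_sub hg, integral_integral_swap hprod, integral_smul_const,
    integral_one_sub_fourierChar_eq_levySymbol, fourierInv_eq, Complex.coe_smul, smul_comm (𝐞 _)]

theorem tendsto_integral_fourierInv_sub_fourierInv_sub {ν : Measure E} [ν.IsNegInvariant]
    (hν : Integrable (fun h ↦ min 1 (‖h‖ ^ 2)) ν) {g : E → F} (hg : Integrable g)
    (hνg : Integrable fun ξ ↦ levySymbol ν ξ • g ξ) (x : E) :
    Tendsto (fun δ : ℝ ↦ ∫ h in {h | δ < ‖h‖}, (𝓕⁻ g x - 𝓕⁻ g (x - h)) ∂ν) (𝓝[>] 0)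
      (𝓝 (𝓕⁻ (fun ξ ↦ levySymbol ν ξ • g ξ) x)) := by
  have hfubini : ∀ᶠ δ : ℝ in 𝓝[>] 0, 𝓕⁻ (fun ξ ↦ levySymbol (ν.restrict {h | δ < ‖h‖}) ξ • g ξ) x
      = ∫ h in {h | δ < ‖h‖}, (𝓕⁻ g x - 𝓕⁻ g (x - h)) ∂ν := by
    filter_upwards [self_mem_nhdsWithin] with δ hδ
    have := isFiniteMeasure_restrict_lt_norm hν hδ
    have := isNegInvariant_restrict_lt_norm ν δ
    exact (integral_fourierInv_sub_fourierInv_sub _ hg x).symm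
  refine Tendsto.congr' hfubini ?_
  simp_rw [fourierInv_eq]
  refine tendsto_integral_filter_of_dominated_convergence (fun ξ ↦ ‖levySymbol ν ξ • g ξ‖)
    ?_ (.of_forall fun δ ↦ .of_forall fun ξ ↦ ?_) hνg.norm (.of_forall fun ξ ↦ ?_)
  · filter_upwards [self_mem_nhdsWithin] with δ hδ
    have := isFiniteMeasure_restrict_lt_norm hν hδ
    have := (continuous_levySymbol (ν.restrict {h | δ < ‖h‖})).aestronglyMeasurable.smul
      hg.aestronglyMeasurable
    exact .smul (by fun_prop) this
  · rw [Circle.norm_smul, norm_smul, norm_smul, norm_of_nonneg (levySymbol_nonneg _ ξ),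
      norm_of_nonneg (levySymbol_nonneg ν ξ)]
    gcongr
    exact levySymbol_restrict_le hν _ ξ
  · exact ((tendsto_levySymbol_restrict_lt_norm hν ξ).smul_const (g ξ)).const_smul (𝐞 ⟪ξ, x⟫)

end LevyGenerator

section StableLevyMeasure

open Real Set Filter Module

/-- The Lévy measure `‖h‖^{-(dim E + 2s)} dh` of the isotropic `2s`-stable process, whose generator
is a multiple of `-(-Δ)^s`. -/
noncomputable def stableLevyMeasure (E : Type*) [NormedAddCommGroup E] [InnerProductSpace ℝ E]
    [FiniteDimensional ℝ E] [MeasurableSpace E] [BorelSpace E] (s : ℝ) : Measure E :=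
  volume.withDensity fun h ↦ ENNReal.ofReal (‖h‖ ^ (-(finrank ℝ E + 2 * s)))

variable {E : Type*} [NormedAddCommGroup E] [InnerProductSpace ℝ E] [FiniteDimensional ℝ E]
  [MeasurableSpace E] [BorelSpace E] {s : ℝ}
  {F : Type*} [NormedAddCommGroup F] [NormedSpace ℝ F]

lemma setIntegral_stableLevyMeasure (f : E → F) (S : Set E) :
    ∫ h in S, f h ∂stableLevyMeasure E s
      = ∫ h in S, ‖h‖ ^ (-(finrank ℝ E + 2 * s)) • f h := by
  rw [stableLevyMeasure, setIntegral_withDensity_eq_setIntegral_toReal_smul' S (by fun_prop)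
    (.of_forall fun _ ↦ ENNReal.ofReal_lt_top)]
  simp_rw [ENNReal.toReal_ofReal (rpow_nonneg (norm_nonneg _) _)]

lemma setIntegral_lt_norm_sub (s δ : ℝ) (u : E → F) (x : E) :
    ∫ y in {y | δ < ‖x - y‖}, (‖x - y‖ ^ (finrank ℝ E + 2 * s))⁻¹ • (u x - u y)
      = ∫ h in {h | δ < ‖h‖}, (u x - u (x - h)) ∂stableLevyMeasure E s := by
  rw [setIntegral_stableLevyMeasure]
  simp_rw [← rpow_neg (norm_nonneg _)]
  simpa using (Measure.measurePreserving_sub_left volume x).setIntegral_preimage_emb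
    (measurableEmbedding_subLeft x)
    (fun h ↦ ‖h‖ ^ (-(finrank ℝ E + 2 * s)) • (u x - u (x - h))) {h | δ < ‖h‖}

lemma levySymbol_stableLevyMeasure_eq_integral (ξ : E) :
    levySymbol (stableLevyMeasure E s) ξ
      = ∫ h : E, ‖h‖ ^ (-(finrank ℝ E + 2 * s)) * (1 - cos (2 * π * ⟪h, ξ⟫)) := by
  simpa [levySymbol] using setIntegral_stableLevyMeasure (s := s)
    (fun h : E ↦ 1 - cos (2 * π * ⟪h, ξ⟫)) univ

instance : (stableLevyMeasure E s).IsNegInvariant where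
  neg_eq_self := by
    ext A hA
    rw [Measure.neg_def, Measure.map_apply measurable_neg hA, stableLevyMeasure,
      withDensity_apply _ hA, withDensity_apply _ (measurable_neg hA),
      ← (Measure.measurePreserving_neg (volume : Measure E)).setLIntegral_comp_preimage hA
        (by fun_prop)]
    simp_rw [norm_neg]

instance [Nontrivial E] : (stableLevyMeasure E s).IsOpenPosMeasure := by
  refine (withDensity_absolutelyContinuous' (by fun_prop) ?_).isOpenPosMeasure
  filter_upwards [Measure.ae_ne volume (0 : E)] with h hh
  have : 0 < ‖h‖ := norm_pos_iff.2 hh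
  exact (ENNReal.ofReal_pos.2 (by positivity)).ne'

lemma integrableOn_Ioi_rpow_mul_min_one_sq (hs : s ∈ Ioo (0 : ℝ) 1) :
    IntegrableOn (fun r : ℝ ↦ r ^ (-1 - 2 * s) * min 1 (r ^ 2)) (Ioi 0) := by
  rw [← Ioc_union_Ioi_eq_Ioi zero_le_one]
  refine IntegrableOn.union ?_ ?_
  · have hnear : IntegrableOn (fun r : ℝ ↦ r ^ (1 - 2 * s)) (Ioc 0 1) :=
      (intervalIntegrable_iff_integrableOn_Ioc_of_le zero_le_one).1
        (intervalIntegral.intervalIntegrable_rpow' (by linarith [hs.2]))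
    refine hnear.congr_fun (fun r hr ↦ ?_) measurableSet_Ioc
    simp only
    rw [min_eq_right (pow_le_one₀ hr.1.le hr.2), ← rpow_natCast, ← rpow_add hr.1]
    congr 1; push_cast; ring
  · have hfar : IntegrableOn (fun r : ℝ ↦ r ^ (-1 - 2 * s)) (Ioi 1) :=
      integrableOn_Ioi_rpow_of_lt (by linarith [hs.1]) one_pos
    refine hfar.congr_fun (fun r hr ↦ ?_) measurableSet_Ioi
    simp only
    rw [min_eq_left (one_le_pow₀ (le_of_lt hr)), mul_one]

lemma integrable_min_one_sq_norm_stableLevyMeasure [Nontrivial E] (hs : s ∈ Ioo (0 : ℝ) 1) :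
    Integrable (fun h ↦ min 1 (‖h‖ ^ 2)) (stableLevyMeasure E s) := by
  rw [stableLevyMeasure, integrable_withDensity_iff_integrable_smul' (by fun_prop)
    (.of_forall fun _ ↦ ENNReal.ofReal_lt_top)]
  simp_rw [ENNReal.toReal_ofReal (rpow_nonneg (norm_nonneg _) _)]
  rw [integrable_fun_norm_addHaar volume
    (f := fun r ↦ r ^ (-(finrank ℝ E + 2 * s)) • min 1 (r ^ 2))]
  refine (integrableOn_Ioi_rpow_mul_min_one_sq hs).congr_fun (fun r hr ↦ ?_) measurableSet_Ioi
  have polar_exponent : r ^ (-1 - 2 * s)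
      = r ^ (finrank ℝ E - 1) * r ^ (-(finrank ℝ E + 2 * s)) := by
    rw [← rpow_natCast, ← rpow_add hr, Nat.cast_sub finrank_pos]
    congr 1; push_cast; ring
  simp only [smul_eq_mul]
  rw [polar_exponent, mul_assoc]

lemma levySymbol_stableLevyMeasure_smul (hs : 0 < s) {c : ℝ} (hc : 0 ≤ c) (ξ : E) :
    levySymbol (stableLevyMeasure E s) (c • ξ)
      = c ^ (2 * s) * levySymbol (stableLevyMeasure E s) ξ := by
  rcases hc.eq_or_lt with rfl | hc
  · simp [levySymbol, zero_rpow (mul_pos two_pos hs).ne']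
  let k (h : E) : ℝ := ‖h‖ ^ (-(finrank ℝ E + 2 * s)) * (1 - cos (2 * π * ⟪h, ξ⟫))
  have hscale (h : E) : ‖h‖ ^ (-(finrank ℝ E + 2 * s)) * (1 - cos (2 * π * ⟪h, c • ξ⟫))
      = c ^ (finrank ℝ E + 2 * s) * k (c • h) := by
    simp only [k]
    rw [norm_smul, norm_of_nonneg hc.le, mul_rpow hc.le (norm_nonneg h), real_inner_smul_left,
      real_inner_smul_right, rpow_neg hc.le]
    field_simp
  simp_rw [levySymbol_stableLevyMeasure_eq_integral, hscale, integral_const_mul]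
  rw [Measure.integral_comp_smul_of_nonneg volume k c (hR := hc.le), rpow_add hc, rpow_natCast,
    smul_eq_mul]
  field_simp
  rfl

lemma levySymbol_stableLevyMeasure_linearIsometryEquiv (R : E ≃ₗᵢ[ℝ] E) (ξ : E) :
    levySymbol (stableLevyMeasure E s) (R ξ) = levySymbol (stableLevyMeasure E s) ξ := by
  simp_rw [levySymbol_stableLevyMeasure_eq_integral]
  rw [← R.measurePreserving.integral_comp R.toHomeomorph.measurableEmbedding]
  simp_rw [R.inner_map_map, R.norm_map]

lemma levySymbol_stableLevyMeasure_eq_of_norm_eq {ξ η : E} (h : ‖ξ‖ = ‖η‖) :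
    levySymbol (stableLevyMeasure E s) ξ = levySymbol (stableLevyMeasure E s) η := by
  rw [← levySymbol_stableLevyMeasure_linearIsometryEquiv (ℝ ∙ (ξ - η))ᗮ.reflection ξ,
    Submodule.reflection_sub h]

lemma levySymbol_stableLevyMeasure_eq_rpow_norm_mul (hs : 0 < s) {e : E} (he : ‖e‖ = 1) (ξ : E) :
    levySymbol (stableLevyMeasure E s) ξ
      = ‖ξ‖ ^ (2 * s) * levySymbol (stableLevyMeasure E s) e := by
  rw [← levySymbol_stableLevyMeasure_smul hs (norm_nonneg ξ)]
  exact levySymbol_stableLevyMeasure_eq_of_norm_eq (by simp [norm_smul, he])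

end StableLevyMeasure

section WeightedIntegrability

open Real

variable {E : Type*} [NormedAddCommGroup E] [MeasurableSpace E] [BorelSpace E] {μ : Measure E}
  {F : Type*} [NormedAddCommGroup F] [NormedSpace ℝ F] {a : ℝ}

lemma integrable_of_integrable_rpow_norm_smul [ProperSpace E] [IsLocallyFiniteMeasure μ]
    {g : E → F} (hg : Continuous g) (ha : 0 ≤ a) (hag : Integrable (fun ξ ↦ ‖ξ‖ ^ a • g ξ) μ) :
    Integrable g μ := by
  rw [← integrableOn_univ, ← Set.union_compl_self (Metric.closedBall (0 : E) 1)]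
  refine (hg.locallyIntegrable.integrableOn_isCompact (isCompact_closedBall 0 1)).union
    (Integrable.mono hag.integrableOn hg.aestronglyMeasurable ?_)
  filter_upwards [ae_restrict_mem Metric.isClosed_closedBall.measurableSet.compl] with ξ hξ
  have one_le_norm : 1 ≤ ‖ξ‖ := by simpa using (not_le.1 (mt mem_closedBall_zero_iff.2 hξ)).le
  rw [norm_smul, norm_of_nonneg (by positivity)]
  exact le_mul_of_one_le_left (norm_nonneg _) (one_le_rpow one_le_norm ha)

lemma integrable_rpow_norm_smul_schwartz [NormedSpace ℝ E] [SecondCountableTopology E]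
    [μ.HasTemperateGrowth] (ha : 0 ≤ a) (g : SchwartzMap E F) :
    Integrable (fun ξ ↦ ‖ξ‖ ^ a • g ξ) μ := by
  have hmeas : AEStronglyMeasurable (fun ξ : E ↦ ‖ξ‖ ^ a) μ := by fun_prop
  refine ((g.integrable_pow_mul μ 0).add (g.integrable_pow_mul μ ⌈a⌉₊)).mono'
    (hmeas.smul g.continuous.aestronglyMeasurable) (.of_forall fun ξ ↦ ?_)
  rw [norm_smul, norm_of_nonneg (by positivity), Pi.add_apply, ← add_mul]
  gcongr
  rcases le_total ‖ξ‖ 1 with hle | hge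
  · rw [pow_zero]
    exact (rpow_le_one (norm_nonneg ξ) hle ha).trans (le_add_of_nonneg_right (by positivity))
  · refine le_add_of_nonneg_of_le (by positivity) ?_
    rw [← rpow_natCast]
    exact rpow_le_rpow_of_exponent_le hge (Nat.le_ceil a)

end WeightedIntegrability

section FractionalLaplacian

open Real Set Filter Topology Module
open scoped FourierTransform

variable {E : Type*} [NormedAddCommGroup E] [InnerProductSpace ℝ E] [FiniteDimensional ℝ E]
  [MeasurableSpace E] [BorelSpace E]
  {F : Type*} [NormedAddCommGroup F] [NormedSpace ℂ F]

lemma FT_eq_fourier {d : ℕ} (u : EuclideanSpace ℝ (Fin d) → ℂ) : FT u = 𝓕 u := by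
  ext ξ
  simp only [FT, fourier_eq', smul_eq_mul, neg_mul]

theorem fracLap_pv_eq_fourier_general [Nontrivial E] [CompleteSpace F] {s : ℝ}
    (hs : s ∈ Ioo (0 : ℝ) 1) :
    ∃ C : ℝ, 0 < C ∧ ∀ u : E → F, Continuous u → Integrable u →
      Integrable (fun ξ ↦ ‖ξ‖ ^ (2 * s) • 𝓕 u ξ) → ∀ x : E,
        Tendsto
          (fun δ : ℝ ↦
            ∫ y in {y | δ < ‖x - y‖}, (‖x - y‖ ^ (finrank ℝ E + 2 * s))⁻¹ • (u x - u y))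
          (𝓝[>] 0) (𝓝 (C • 𝓕⁻ (fun ξ ↦ ‖ξ‖ ^ (2 * s) • 𝓕 u ξ) x)) := by
  obtain ⟨e, he⟩ := exists_norm_eq E zero_le_one
  let C := levySymbol (stableLevyMeasure E s) e
  have hν := integrable_min_one_sq_norm_stableLevyMeasure (E := E) hs
  have he₀ : e ≠ 0 := norm_ne_zero_iff.1 (he.trans_ne one_ne_zero)
  refine ⟨C, levySymbol_pos hν he₀, fun u hu hu₁ hsu x ↦ ?_⟩
  have hcont : Continuous (𝓕 u) :=
    VectorFourier.fourierIntegral_continuous continuous_fourierChar continuous_inner hu₁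
  have hFu : Integrable (𝓕 u) :=
    integrable_of_integrable_rpow_norm_smul hcont (mul_pos two_pos hs.1).le hsu
  have hsymbol : (fun ξ ↦ levySymbol (stableLevyMeasure E s) ξ • 𝓕 u ξ)
      = C • fun ξ ↦ ‖ξ‖ ^ (2 * s) • 𝓕 u ξ := by
    ext ξ
    rw [levySymbol_stableLevyMeasure_eq_rpow_norm_mul hs.1 he, mul_comm, mul_smul, Pi.smul_apply]
  have hlim := tendsto_integral_fourierInv_sub_fourierInv_sub hν hFu
    (hsymbol ▸ hsu.smul C) x
  simp_rw [hsymbol, hu.fourierInv_fourier_eq hu₁ hFu, ← setIntegral_lt_norm_sub] at hlim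
  simpa [fourierInv_eq, smul_comm _ C, integral_smul] using hlim

end FractionalLaplacian

/-- Equivalence of the principal-value definition of `(-Δ)^s` with the Fourier
multiplier definition: the truncated singular integrals converge, as `δ → 0⁺`,
to `C ∫ e^{2πi x·ξ} ‖ξ‖^{2s} (𝓕u)(ξ) dξ`. -/
theorem fracLap_pv_eq_fourier (d : ℕ) (hd : 1 ≤ d) (s : ℝ) (hs : s ∈ Set.Ioo (0 : ℝ) 1) :
    ∃ C : ℝ, 0 < C ∧
      ∀ u : SchwartzMap (EuclideanSpace ℝ (Fin d)) ℂ, ∀ x : EuclideanSpace ℝ (Fin d),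
        Filter.Tendsto
          (fun δ : ℝ =>
            ∫ y in {y : EuclideanSpace ℝ (Fin d) | δ < ‖x - y‖},
              (u x - u y) / ((‖x - y‖ ^ ((d : ℝ) + 2 * s) : ℝ) : ℂ))
          (nhdsWithin 0 (Set.Ioi 0))
          (nhds ((C : ℂ) * ∫ ξ : EuclideanSpace ℝ (Fin d),
            Complex.exp (((2 * Real.pi * ⟪x, ξ⟫) : ℝ) * Complex.I)
              * (‖ξ‖ ^ (2 * s) : ℝ) * FT (⇑u) ξ)) := by
  have : Nonempty (Fin d) := ⟨⟨0, hd⟩⟩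
  obtain ⟨C, hC, hlim⟩ :=
    fracLap_pv_eq_fourier_general (E := EuclideanSpace ℝ (Fin d)) (F := ℂ) hs
  refine ⟨C, hC, fun u x ↦ ?_⟩
  simpa [FT_eq_fourier, Real.fourierInv_eq', div_eq_inv_mul, real_inner_comm, mul_assoc]
    using hlim u u.continuous u.integrable
      (integrable_rpow_norm_smul_schwartz (by linarith [hs.1]) (FourierTransform.fourier u)) x
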